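/- arXiv:2602.08721 — 2 statements merged into one kernel-verified Lean document; each statement's English description precedes it below -/
import Mathlib

section
/- The series identity ∑_{n≥1} (−1/4)^n · (1)_n / ((1/2)_n) · ( H_{2n}/n³ + 6/(5 n⁴) ) = −π⁴/75 holds. -/
/-- The rising factorial (Pochhammer symbol) `(a)ₙ = a(a+1)⋯(a+n-1)`. -/
noncomputable def risingFactorial (a : ℝ) (n : ℕ) : ℝ :=
  ∏ i ∈ Finset.range n, (a + i)

/-- The generalized harmonic number `H_n^{(s)} = ∑_{k=1}^n 1/k^s`. -/
noncomputable def genHarmonic (s n : ℕ) : ℝ :=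
  ∑ k ∈ Finset.range n, 1 / ((k : ℝ) + 1) ^ s

/-!
Apéry's acceleration `∑ₘ 2/(y+m)³ = ∑ₖ G(k,y)` of the Hurwitz series comes from a Wilf–Zeilberger
pair `F(k+1,y) - F(k,y) = G(k,y+1) - G(k,y)` with `F(0,y) = 2/y³`. Differentiating the pair in `y`
gives another one, for `∑ₘ -6/(y+m)⁴`; the derivative of a Pochhammer symbol brings in harmonic
numbers, and at `y = 1` the `k`-th term is five times the `k`-th term of the stated series, while
the sum is `-6 ζ(4) = -π⁴/15`.
-/

open Filter Topology

section WilfZeilberger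

variable {E : Type*} [AddCommGroup E] [TopologicalSpace E] [IsTopologicalAddGroup E] [T2Space E]
  {F G : ℕ → ℕ → E}

lemma tsum_succ_sub_tsum_of_wilfZeilberger
    (hFG : ∀ k m, F (k + 1) m - F k m = G k (m + 1) - G k m) (hF : ∀ k, Summable (F k))
    (hG : ∀ k, Tendsto (G k) atTop (𝓝 0)) (k : ℕ) :
    ∑' m, F (k + 1) m - ∑' m, F k m = -G k 0 := by
  have hsum := ((hF (k + 1)).hasSum.sub (hF k).hasSum).tendsto_sum_nat
  simp_rw [hFG, Finset.sum_range_sub (G k)] at hsum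
  exact tendsto_nhds_unique hsum (by simpa using (hG k).sub_const (G k 0))

theorem tendsto_sum_range_of_wilfZeilberger
    (hFG : ∀ k m, F (k + 1) m - F k m = G k (m + 1) - G k m) (hF : ∀ k, Summable (F k))
    (hG : ∀ k, Tendsto (G k) atTop (𝓝 0))
    (hlim : Tendsto (fun k => ∑' m, F k m) atTop (𝓝 0)) :
    Tendsto (fun n => ∑ k ∈ Finset.range n, G k 0) atTop (𝓝 (∑' m, F 0 m)) := by
  have hG₀ (k : ℕ) : G k 0 = ∑' m, F k m - ∑' m, F (k + 1) m := by
    rw [← neg_sub, tsum_succ_sub_tsum_of_wilfZeilberger hFG hF hG, neg_neg]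
  simp_rw [hG₀, Finset.sum_range_sub' fun k => ∑' m, F k m]
  simpa using hlim.const_sub (∑' m, F 0 m)

end WilfZeilberger

section RisingFactorial

variable {a b : ℝ}

@[simp]
lemma risingFactorial_zero (a : ℝ) : risingFactorial a 0 = 1 := by
  simp [risingFactorial]

lemma risingFactorial_succ (a : ℝ) (n : ℕ) :
    risingFactorial a (n + 1) = risingFactorial a n * (a + n) :=
  Finset.prod_range_succ _ _

lemma risingFactorial_succ' (a : ℝ) (n : ℕ) :
    risingFactorial a (n + 1) = a * risingFactorial (a + 1) n := by
  simp only [risingFactorial, Finset.prod_range_succ', Nat.cast_zero, add_zero, mul_comm a]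
  push_cast
  simp only [add_assoc, add_comm (1 : ℝ)]

lemma risingFactorial_pos (ha : 0 < a) (n : ℕ) : 0 < risingFactorial a n :=
  Finset.prod_pos fun _ _ => by positivity

lemma risingFactorial_le_risingFactorial (ha : 0 ≤ a) (hab : a ≤ b) (n : ℕ) :
    risingFactorial a n ≤ risingFactorial b n :=
  Finset.prod_le_prod (fun _ _ => by positivity) fun _ _ => by gcongr

lemma risingFactorial_two_mul (a : ℝ) (n : ℕ) :
    risingFactorial (2 * a) (2 * n) =
      4 ^ n * risingFactorial a n * risingFactorial (a + 1 / 2) n := by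
  induction n with
  | zero => simp
  | succ n ih =>
    simp only [mul_add_one 2 n, risingFactorial_succ, ih, pow_succ]
    push_cast
    ring

lemma succ_mul_risingFactorial_one_sq_le (k : ℕ) :
    (k + 1) * risingFactorial 1 k ^ 2 ≤ risingFactorial 1 (2 * k) := by
  induction k with
  | zero => simp
  | succ k ih =>
    have hpos := risingFactorial_pos one_pos (2 * k)
    simp only [mul_add_one 2 k, risingFactorial_succ]
    push_cast
    calc ((k : ℝ) + 1 + 1) * (risingFactorial 1 k * (1 + k)) ^ 2
        = (k + 1) * risingFactorial 1 k ^ 2 * ((k + 1) * (k + 2)) := by ring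
      _ ≤ risingFactorial 1 (2 * k) * ((1 + 2 * k) * (1 + (2 * k + 1))) := by
        gcongr ?_ * ?_
        nlinarith [k.cast_nonneg (α := ℝ)]
      _ = _ := by ring

/-- The sum `∑_{i<n} 1/(a+i) = ψ(a+n) - ψ(a)`, the logarithmic derivative of `a ↦ (a)ₙ`. -/
noncomputable def shiftedHarmonic (a : ℝ) (n : ℕ) : ℝ :=
  ∑ i ∈ Finset.range n, 1 / (a + i)

lemma shiftedHarmonic_succ (a : ℝ) (n : ℕ) :
    shiftedHarmonic a (n + 1) = shiftedHarmonic a n + 1 / (a + n) :=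
  Finset.sum_range_succ _ _

lemma shiftedHarmonic_one (n : ℕ) : shiftedHarmonic 1 n = genHarmonic 1 n := by
  simp only [shiftedHarmonic, genHarmonic, pow_one, add_comm]

lemma shiftedHarmonic_nonneg (ha : 0 ≤ a) (n : ℕ) : 0 ≤ shiftedHarmonic a n :=
  Finset.sum_nonneg fun _ _ => by positivity

lemma shiftedHarmonic_le (ha : 0 < a) (n : ℕ) : shiftedHarmonic a n ≤ n / a := by
  calc shiftedHarmonic a n ≤ ∑ _i ∈ Finset.range n, 1 / a :=
        Finset.sum_le_sum fun i _ => by gcongr; linarith [i.cast_nonneg (α := ℝ)]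
    _ = n / a := by simp [div_eq_mul_inv]

lemma hasDerivAt_risingFactorial (ha : 0 < a) (n : ℕ) :
    HasDerivAt (risingFactorial · n) (risingFactorial a n * shiftedHarmonic a n) a := by
  induction n with
  | zero => simpa [shiftedHarmonic] using hasDerivAt_const a (1 : ℝ)
  | succ n ih =>
    simp only [risingFactorial_succ, shiftedHarmonic_succ]
    refine (ih.mul ((hasDerivAt_id a).add_const (n : ℝ))).congr_deriv ?_
    simp only [id]
    field_simp

end RisingFactorial

section AperyPair

variable {y : ℝ}

/-- The alternating hypergeometric factor `(-1)ᵏ k!² / (y)₂ₖ₊₁` common to Apéry's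
Wilf–Zeilberger pair. -/
noncomputable def aperyWeight (k : ℕ) (y : ℝ) : ℝ :=
  (-1) ^ k * risingFactorial 1 k ^ 2 / risingFactorial y (2 * k + 1)

/-- The member `F(k, y)` of Apéry's Wilf–Zeilberger pair, with `F(0, y) = 2 / y³`. -/
noncomputable def aperySummand (k : ℕ) (y : ℝ) : ℝ :=
  aperyWeight k y * (2 / (y + k) ^ 2)

/-- The member `G(k, y)` of Apéry's Wilf–Zeilberger pair; `∑ₖ G(k, 1)` is Apéry's series
for `2 ζ(3)`. -/
noncomputable def aperyMate (k : ℕ) (y : ℝ) : ℝ :=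
  aperyWeight k y * (2 / (y + k) ^ 2 + 1 / ((k + 1) * (y + 2 * k + 1)))

lemma aperyWeight_succ_left (hy : 0 < y) (k : ℕ) :
    aperyWeight (k + 1) y =
      -aperyWeight k y * (k + 1) ^ 2 / ((y + 2 * k + 1) * (y + 2 * k + 2)) := by
  have hpos := risingFactorial_pos hy (2 * k + 1)
  simp only [aperyWeight, mul_add_one 2 k, add_right_comm _ 2 1]
  rw [risingFactorial_succ y (2 * k + 1 + 1), risingFactorial_succ y (2 * k + 1),
    risingFactorial_succ 1 k, pow_succ]
  push_cast
  field_simp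
  ring

lemma aperyWeight_add_one_right (hy : 0 < y) (k : ℕ) :
    aperyWeight k (y + 1) = aperyWeight k y * (y / (y + 2 * k + 1)) := by
  have hpos := risingFactorial_pos hy (2 * k + 1)
  have hpos' := risingFactorial_pos (by positivity : 0 < y + 1) (2 * k + 1)
  have hshift : y * risingFactorial (y + 1) (2 * k + 1) =
      risingFactorial y (2 * k + 1) * (y + 2 * k + 1) := by
    rw [← risingFactorial_succ', risingFactorial_succ]
    push_cast
    ring
  simp only [aperyWeight]
  field_simp
  linear_combination -risingFactorial 1 k ^ 2 * hshift

theorem aperySummand_succ_sub (hy : 0 < y) (k : ℕ) :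
    aperySummand (k + 1) y - aperySummand k y = aperyMate k (y + 1) - aperyMate k y := by
  simp only [aperySummand, aperyMate, aperyWeight_succ_left hy, aperyWeight_add_one_right hy]
  push_cast
  have h₁ : y + 1 + k = y + (k + 1) := by ring
  have h₂ : y + 1 + 2 * k + 1 = y + 2 * k + 2 := by ring
  rw [h₁, h₂]
  field_simp
  ring

lemma abs_aperyWeight_le (hy : 0 < y) (k : ℕ) : |aperyWeight k y| ≤ 1 / ((k + 1) * y) := by
  have hpos := risingFactorial_pos hy (2 * k + 1)
  have hle : (k + 1) * y * risingFactorial 1 k ^ 2 ≤ risingFactorial y (2 * k + 1) := by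
    calc (k + 1) * y * risingFactorial 1 k ^ 2
        = y * ((k + 1) * risingFactorial 1 k ^ 2) := by ring
      _ ≤ y * risingFactorial 1 (2 * k) := by
        gcongr; exact succ_mul_risingFactorial_one_sq_le k
      _ ≤ y * risingFactorial (y + 1) (2 * k) := by
        gcongr; exact risingFactorial_le_risingFactorial zero_le_one (by linarith) _
      _ = risingFactorial y (2 * k + 1) := (risingFactorial_succ' y _).symm
  rw [aperyWeight, abs_div, abs_mul, abs_neg_one_pow, one_mul, abs_of_pos hpos, abs_sq,
    div_le_div_iff₀ hpos (by positivity)]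
  linarith

lemma hasDerivAt_aperyWeight (hy : 0 < y) (k : ℕ) :
    HasDerivAt (aperyWeight k) (-aperyWeight k y * shiftedHarmonic y (2 * k + 1)) y := by
  have hne := (risingFactorial_pos hy (2 * k + 1)).ne'
  refine ((hasDerivAt_const y ((-1) ^ k * risingFactorial 1 k ^ 2)).div
    (hasDerivAt_risingFactorial hy (2 * k + 1)) hne).congr_deriv ?_
  simp only [aperyWeight]
  field_simp
  ring

lemma hasDerivAt_aperyWeight_mul {s : ℝ → ℝ} {s' : ℝ} (hy : 0 < y) (k : ℕ)
    (hs : HasDerivAt s s' y) :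
    HasDerivAt (fun x => aperyWeight k x * s x)
      (aperyWeight k y * (s' - shiftedHarmonic y (2 * k + 1) * s y)) y :=
  ((hasDerivAt_aperyWeight hy k).mul hs).congr_deriv (by ring)

lemma abs_deriv_aperyWeight_mul_le {s : ℝ → ℝ} {s' : ℝ} (hy : 0 < y) (k : ℕ)
    (hs : HasDerivAt s s' y) (hs' : |s'| ≤ 2 / y * s y) :
    |deriv (fun x => aperyWeight k x * s x) y| ≤ 3 / y ^ 2 * s y := by
  have hs₀ : 0 ≤ s y := nonneg_of_mul_nonneg_right ((abs_nonneg s').trans hs') (by positivity)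
  have hψ := shiftedHarmonic_le hy (2 * k + 1)
  have hψ₀ := shiftedHarmonic_nonneg hy.le (2 * k + 1)
  push_cast at hψ
  rw [(hasDerivAt_aperyWeight_mul hy k hs).deriv, abs_mul]
  calc |aperyWeight k y| * |s' - shiftedHarmonic y (2 * k + 1) * s y|
      ≤ 1 / ((k + 1) * y) * (|s'| + |shiftedHarmonic y (2 * k + 1) * s y|) := by
        gcongr
        exacts [abs_aperyWeight_le hy k, abs_sub _ _]
    _ ≤ 1 / ((k + 1) * y) * (2 / y * s y + (2 * k + 1) / y * s y) := by
        rw [abs_of_nonneg (mul_nonneg hψ₀ hs₀)]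
        gcongr
    _ = (2 * k + 3) / (k + 1) / y ^ 2 * s y := by field_simp; ring
    _ ≤ 3 / y ^ 2 * s y := by
        gcongr
        rw [div_le_iff₀ (by positivity)]
        linarith [k.cast_nonneg (α := ℝ)]

lemma hasDerivAt_two_div_add_sq {c : ℝ} (hyc : y + c ≠ 0) :
    HasDerivAt (fun x : ℝ => 2 / (x + c) ^ 2) (-4 / (y + c) ^ 3) y := by
  refine ((hasDerivAt_const y (2 : ℝ)).div (((hasDerivAt_id y).add_const c).pow 2)
    (pow_ne_zero 2 hyc)).congr_deriv ?_
  simp only [Pi.pow_apply, id]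
  field_simp
  ring

lemma hasDerivAt_two_div_add_sq_add_one_div (hy : 0 < y) (k : ℕ) :
    HasDerivAt (fun x : ℝ => 2 / (x + k) ^ 2 + 1 / ((k + 1) * (x + 2 * k + 1)))
      (-4 / (y + k) ^ 3 - 1 / ((k + 1) * (y + 2 * k + 1) ^ 2)) y := by
  refine ((hasDerivAt_two_div_add_sq (by positivity)).add ((hasDerivAt_const y (1 : ℝ)).div
    ((((hasDerivAt_id y).add_const (2 * k : ℝ)).add_const 1).const_mul ((k : ℝ) + 1))
    (by simp only [id]; positivity))).congr_deriv ?_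
  simp only [id]
  field_simp
  ring

lemma hasDerivAt_aperySummand (hy : 0 < y) (k : ℕ) :
    HasDerivAt (aperySummand k) (aperyWeight k y *
      (-4 / (y + k) ^ 3 - shiftedHarmonic y (2 * k + 1) * (2 / (y + k) ^ 2))) y :=
  hasDerivAt_aperyWeight_mul hy k (hasDerivAt_two_div_add_sq (by positivity))

lemma hasDerivAt_aperyMate (hy : 0 < y) (k : ℕ) :
    HasDerivAt (aperyMate k) (aperyWeight k y *
      (-4 / (y + k) ^ 3 - 1 / ((k + 1) * (y + 2 * k + 1) ^ 2) -
        shiftedHarmonic y (2 * k + 1) *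
          (2 / (y + k) ^ 2 + 1 / ((k + 1) * (y + 2 * k + 1))))) y :=
  hasDerivAt_aperyWeight_mul hy k (hasDerivAt_two_div_add_sq_add_one_div hy k)

theorem deriv_aperySummand_succ_sub (hy : 0 < y) (k : ℕ) :
    deriv (aperySummand (k + 1)) y - deriv (aperySummand k) y =
      deriv (aperyMate k) (y + 1) - deriv (aperyMate k) y := by
  have hF (k : ℕ) := (hasDerivAt_aperySummand hy k).differentiableAt.hasDerivAt
  have hG := (hasDerivAt_aperyMate hy k).differentiableAt.hasDerivAt
  have hG₁ := (hasDerivAt_aperyMate (by positivity : 0 < y + 1) k).differentiableAt.hasDerivAt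
  refine ((hF (k + 1)).sub (hF k)).unique
    (((hG₁.comp_add_const y 1).sub hG).congr_of_eventuallyEq ?_)
  filter_upwards [lt_mem_nhds hy] with x hx using aperySummand_succ_sub hx k

lemma abs_deriv_aperySummand_le (hy : 0 < y) (k : ℕ) :
    |deriv (aperySummand k) y| ≤ 6 / (y ^ 2 * (y + k) ^ 2) := by
  refine (abs_deriv_aperyWeight_mul_le hy k
    (hasDerivAt_two_div_add_sq (by positivity)) ?_).trans_eq ?_
  · rw [neg_div, abs_neg, abs_of_pos (by positivity)]
    calc 4 / (y + k) ^ 3 = 2 / (y + k) * (2 / (y + k) ^ 2) := by field_simp; norm_num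
      _ ≤ 2 / y * (2 / (y + k) ^ 2) := by gcongr; linarith [k.cast_nonneg (α := ℝ)]
  · field_simp
    norm_num

lemma abs_deriv_aperyMate_le (hy : 0 < y) (k : ℕ) :
    |deriv (aperyMate k) y| ≤ 3 / y ^ 2 * (2 / (y + k) ^ 2 + 1 / ((k : ℝ) + 1) ^ 2) := by
  refine (abs_deriv_aperyWeight_mul_le hy k
    (hasDerivAt_two_div_add_sq_add_one_div hy k) ?_).trans ?_
  · rw [neg_div, ← neg_add', abs_neg, abs_of_pos (by positivity)]
    calc 4 / (y + k) ^ 3 + 1 / ((k + 1) * (y + 2 * k + 1) ^ 2)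
        = 2 / (y + k) * (2 / (y + k) ^ 2) +
            1 / (y + 2 * k + 1) * (1 / ((k + 1) * (y + 2 * k + 1))) := by field_simp; ring
      _ ≤ 2 / y * (2 / (y + k) ^ 2) + 2 / y * (1 / ((k + 1) * (y + 2 * k + 1))) := by
        gcongr <;> linarith [k.cast_nonneg (α := ℝ)]
      _ = 2 / y * (2 / (y + k) ^ 2 + 1 / ((k + 1) * (y + 2 * k + 1))) := by ring
  · rw [sq ((k : ℝ) + 1)]
    gcongr
    linarith [k.cast_nonneg (α := ℝ)]

lemma summable_div_add_nat_sq (c y : ℝ) : Summable fun m : ℕ => c / (y + m) ^ 2 := by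
  have h := (Real.summable_one_div_nat_add_rpow y 2).2 one_lt_two
  simpa [div_eq_mul_inv, add_comm y] using h.mul_left c

lemma tendsto_div_add_nat_sq (c y : ℝ) : Tendsto (fun m : ℕ => c / (y + m) ^ 2) atTop (𝓝 0) :=
  (summable_div_add_nat_sq c y).tendsto_atTop_zero

lemma abs_deriv_aperySummand_add_nat_le (hy : 0 < y) (k m : ℕ) :
    |deriv (aperySummand k) (y + m)| ≤ 6 / (y + k) ^ 2 / (y + m) ^ 2 := by
  calc |deriv (aperySummand k) (y + m)| ≤ 6 / ((y + m) ^ 2 * (y + m + k) ^ 2) :=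
        abs_deriv_aperySummand_le (by positivity) k
    _ ≤ 6 / ((y + m) ^ 2 * (y + k) ^ 2) := by gcongr; linarith [m.cast_nonneg (α := ℝ)]
    _ = 6 / (y + k) ^ 2 / (y + m) ^ 2 := by rw [mul_comm, div_div]

lemma summable_deriv_aperySummand (hy : 0 < y) (k : ℕ) :
    Summable fun m : ℕ => deriv (aperySummand k) (y + m) :=
  .of_norm_bounded (summable_div_add_nat_sq _ y) (abs_deriv_aperySummand_add_nat_le hy k)

lemma tendsto_tsum_deriv_aperySummand (hy : 0 < y) :
    Tendsto (fun k => ∑' m : ℕ, deriv (aperySummand k) (y + m)) atTop (𝓝 0) := by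
  refine squeeze_zero_norm (fun k => ?_)
    (tendsto_div_add_nat_sq (6 * ∑' m : ℕ, 1 / (y + m) ^ 2) y)
  refine tsum_of_norm_bounded ?_ (abs_deriv_aperySummand_add_nat_le hy k)
  rw [mul_div_right_comm]
  simpa only [mul_one_div] using
    (summable_div_add_nat_sq 1 y).hasSum.mul_left (6 / (y + k) ^ 2)

lemma tendsto_deriv_aperyMate (hy : 0 < y) (k : ℕ) :
    Tendsto (fun m : ℕ => deriv (aperyMate k) (y + m)) atTop (𝓝 0) := by
  refine squeeze_zero_norm (fun m => ?_) (tendsto_div_add_nat_sq (3 * (2 / y ^ 2 + 1)) y)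
  calc |deriv (aperyMate k) (y + m)|
      ≤ 3 / (y + m) ^ 2 * (2 / (y + m + k) ^ 2 + 1 / ((k : ℝ) + 1) ^ 2) :=
        abs_deriv_aperyMate_le (by positivity) k
    _ ≤ 3 / (y + m) ^ 2 * (2 / y ^ 2 + 1) := by
        gcongr
        · linarith [k.cast_nonneg (α := ℝ), m.cast_nonneg (α := ℝ)]
        · exact div_le_one_of_le₀ (one_le_pow₀ (by simp)) (by positivity)
    _ = 3 * (2 / y ^ 2 + 1) / (y + m) ^ 2 := by ring

lemma summable_deriv_aperyMate (hy : 0 < y) : Summable fun k => deriv (aperyMate k) y := by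
  refine .of_norm_bounded (.mul_left _ ((summable_div_add_nat_sq 2 y).add ?_))
    (abs_deriv_aperyMate_le hy)
  simpa only [add_comm] using summable_div_add_nat_sq 1 1

lemma deriv_aperySummand_zero (hy : 0 < y) : deriv (aperySummand 0) y = -6 * (1 / y ^ 4) := by
  rw [(hasDerivAt_aperySummand hy 0).deriv]
  simp only [aperyWeight, risingFactorial, shiftedHarmonic, Finset.range_one,
    Finset.prod_singleton, Finset.sum_singleton, Finset.range_zero, Finset.prod_empty, mul_zero,
    Nat.cast_zero, zero_add, add_zero]
  field_simp
  norm_num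

theorem hasSum_deriv_aperyMate (hy : 0 < y) :
    HasSum (fun k => deriv (aperyMate k) y) (-6 * ∑' m : ℕ, 1 / (y + m) ^ 4) := by
  have hF₀ : ∑' m : ℕ, deriv (aperySummand 0) (y + m) = -6 * ∑' m : ℕ, 1 / (y + m) ^ 4 := by
    rw [← tsum_mul_left]
    exact tsum_congr fun m => deriv_aperySummand_zero (by positivity)
  have hlim := tendsto_sum_range_of_wilfZeilberger
    (F := fun k m => deriv (aperySummand k) (y + m)) (G := fun k m => deriv (aperyMate k) (y + m))
    (fun k m => by
      simpa only [Nat.cast_succ, add_assoc] using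
        deriv_aperySummand_succ_sub (by positivity : 0 < y + m) k)
    (summable_deriv_aperySummand hy) (tendsto_deriv_aperyMate hy)
    (tendsto_tsum_deriv_aperySummand hy)
  rw [(summable_deriv_aperyMate hy).hasSum_iff_tendsto_nat, ← hF₀]
  simpa only [Nat.cast_zero, add_zero] using hlim

lemma deriv_aperyMate_one (k : ℕ) :
    deriv (aperyMate k) 1 = -aperyWeight k 1 / (2 * (k + 1)) *
      (5 * genHarmonic 1 (2 * (k + 1)) / (k + 1) + 6 / ((k : ℝ) + 1) ^ 2) := by
  rw [(hasDerivAt_aperyMate one_pos k).deriv, mul_add_one 2 k, ← shiftedHarmonic_one,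
    shiftedHarmonic_succ 1 (2 * k + 1)]
  push_cast
  have h₁ : (1 : ℝ) + k = k + 1 := by ring
  have h₂ : (1 : ℝ) + 2 * k + 1 = 2 * (k + 1) := by ring
  have h₃ : (1 : ℝ) + (2 * k + 1) = 2 * (k + 1) := by ring
  rw [h₁, h₂, h₃]
  field_simp
  ring

lemma risingFactorial_one_div_half_eq_aperyWeight (k : ℕ) :
    (-1 / 4 : ℝ) ^ (k + 1) * risingFactorial 1 (k + 1) / risingFactorial (1 / 2) (k + 1) =
      -aperyWeight k 1 * (k + 1) / 2 := by
  have hpos := risingFactorial_pos one_half_pos (k + 1)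
  have hpos' := risingFactorial_pos one_pos (2 * k + 1)
  have hdup : risingFactorial 1 (2 * k + 1) * (2 * (k + 1)) =
      4 ^ (k + 1) * risingFactorial (1 / 2) (k + 1) * risingFactorial 1 (k + 1) := by
    have h := risingFactorial_two_mul (1 / 2) (k + 1)
    rw [mul_one_div_cancel two_ne_zero, add_halves, mul_add_one 2 k,
      risingFactorial_succ 1 (2 * k + 1)] at h
    rw [← h]
    push_cast
    ring
  rw [div_pow, aperyWeight, pow_succ (-1 : ℝ)]
  rw [risingFactorial_succ 1 k] at hdup ⊢
  field_simp
  linear_combination -risingFactorial 1 k * hdup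

end AperyPair

lemma tsum_one_div_one_add_nat_pow_four :
    ∑' m : ℕ, 1 / (1 + m : ℝ) ^ 4 = Real.pi ^ 4 / 90 := by
  simpa [add_comm] using ((hasSum_nat_add_iff' 1).2 hasSum_zeta_four).tsum_eq

/-- `∑_{n≥1} (−1/4)^n (1)ₙ/(1/2)ₙ (H_{2n}/n³ + 6/(5n⁴)) = −π⁴/75`. -/
theorem harmonic2n_pi4_series :
    ∑' n : ℕ, ((-1 / 4 : ℝ) ^ (n + 1) * risingFactorial 1 (n + 1) /
        risingFactorial (1 / 2) (n + 1) *
        (genHarmonic 1 (2 * (n + 1)) / ((n : ℝ) + 1) ^ 3 + 6 / (5 * ((n : ℝ) + 1) ^ 4)))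
      = -Real.pi ^ 4 / 75 := by
  have hterm (n : ℕ) : (-1 / 4 : ℝ) ^ (n + 1) * risingFactorial 1 (n + 1) /
        risingFactorial (1 / 2) (n + 1) *
        (genHarmonic 1 (2 * (n + 1)) / ((n : ℝ) + 1) ^ 3 + 6 / (5 * ((n : ℝ) + 1) ^ 4)) =
      1 / 5 * deriv (aperyMate n) 1 := by
    rw [risingFactorial_one_div_half_eq_aperyWeight, deriv_aperyMate_one]
    field_simp
  simp_rw [hterm, tsum_mul_left, (hasSum_deriv_aperyMate one_pos).tsum_eq,
    tsum_one_div_one_add_nat_pow_four]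
  ring
end

section
/- The series identity ∑_{n≥1} (−1/4)^n · (1)_n / ((1/2)_n) · ( H_n^{(2)}/n³ − 9/(5 n^5) ) = (2/5) ζ(5) holds, where ζ is the Riemann zeta function. -/
/-!
Newton interpolation of `1 / (y - t)` in `t` at the nodes `1², 2², …` gives, with
`Pⱼ(t) = (t - 1²) ⋯ (t - j²)`,
`1 / (y - t) = ∑_{j < k} Pⱼ(t) / Pⱼ₊₁(y) + Pₖ(t) / ((y - t) Pₖ(y))`.
Take the coefficient of `t ^ r` at `y = n²`, `k = n - 1`, divide by `n` and sum over `n`: since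
`n Pₖ(n²)` is the falling factorial `(n + k)(n + k - 1) ⋯ (n - k)`, the sum over `n` of
`1 / (n Pₖ(n²))` telescopes. In the `N`-th partial sum this leaves a tail of size `O(1/N)` and a
fast converging series for `ζ(2r + 3)` (Koecher). The case `r = 0` is Apéry's series for `ζ(3)`; the
theorem is the case `r = 1`.
-/

open Filter Finset Topology Polynomial Lagrange
open scoped Nat

section Newton

/-- The value at `y` of the truncation of `p` to degrees less than `d`. Since
`1 / (y - t) = ∑ tⁱ / yⁱ⁺¹`, the coefficient of `tʳ` in `p(t) / (y - t)` is
`truncEval p (r + 1) y / y ^ (r + 1)`. -/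
def truncEval {R : Type*} [Semiring R] (p : R[X]) (d : ℕ) (y : R) : R :=
  ∑ i ∈ range d, p.coeff i * y ^ i

theorem truncEval_succ {R : Type*} [Semiring R] (p : R[X]) (d : ℕ) (y : R) :
    truncEval p (d + 1) y = truncEval p d y + p.coeff d * y ^ d :=
  sum_range_succ _ _

theorem truncEval_one_succ {R : Type*} [Semiring R] (d : ℕ) (y : R) :
    truncEval 1 (d + 1) y = 1 := by
  simp [truncEval, coeff_one]

theorem truncEval_mul_X_sub_C {R : Type*} [CommRing R] (p : R[X]) (a y : R) (r : ℕ) :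
    truncEval (p * (X - C a)) (r + 1) y =
      (y - a) * truncEval p (r + 1) y - p.coeff r * y ^ (r + 1) := by
  induction r with
  | zero =>
    simp only [truncEval, zero_add, sum_range_one, mul_coeff_zero, coeff_sub, coeff_X_zero,
      coeff_C_zero]
    ring
  | succ r ih =>
    rw [truncEval_succ, ih, truncEval_succ p (r + 1), coeff_mul_X_sub_C]
    ring

theorem abs_truncEval_succ_le {p : ℝ[X]} {B y : ℝ} (hp : ∀ i, |p.coeff i| ≤ B) (hy : 1 ≤ y)
    (r : ℕ) : |truncEval p (r + 1) y| ≤ (r + 1) * (B * y ^ r) := by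
  have hterm : ∀ i ∈ range (r + 1), |p.coeff i * y ^ i| ≤ B * y ^ r := fun i hi => by
    rw [abs_mul, abs_of_nonneg (by positivity : 0 ≤ y ^ i)]
    exact mul_le_mul (hp i) (pow_le_pow_right₀ hy (mem_range_succ_iff.1 hi)) (by positivity)
      ((abs_nonneg _).trans (hp i))
  calc |truncEval p (r + 1) y| ≤ ∑ i ∈ range (r + 1), |p.coeff i * y ^ i| :=
        abs_sum_le_sum_abs _ _
    _ ≤ #(range (r + 1)) • (B * y ^ r) := sum_le_card_nsmul _ _ _ hterm
    _ = (r + 1) * (B * y ^ r) := by simp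

theorem nodal_range_succ {R : Type*} [CommRing R] (a : ℕ → R) (k : ℕ) :
    nodal (range (k + 1)) a = nodal (range k) a * (X - C (a k)) :=
  prod_range_succ _ _

theorem one_div_pow_succ_eq_sum_nodal {K : Type*} [Field K] {a : ℕ → K} {y : K} {k : ℕ}
    (hy : y ≠ 0) (ha : ∀ j < k, y ≠ a j) (r : ℕ) :
    1 / y ^ (r + 1) =
      ∑ j ∈ range k, (nodal (range j) a).coeff r / (nodal (range (j + 1)) a).eval y +
        truncEval (nodal (range k) a) (r + 1) y / (y ^ (r + 1) * (nodal (range k) a).eval y) := by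
  induction k with
  | zero => simp [truncEval_one_succ]
  | succ k ih =>
    have hk : y - a k ≠ 0 := sub_ne_zero.2 (ha k k.lt_succ_self)
    have hP : (nodal (range k) a).eval y ≠ 0 :=
      eval_nodal_not_at_node fun j hj => ha j ((mem_range.1 hj).trans k.lt_succ_self)
    rw [ih fun j hj => ha j (hj.trans k.lt_succ_self), sum_range_succ, add_assoc,
      nodal_range_succ, truncEval_mul_X_sub_C, eval_mul, eval_sub, eval_X, eval_C]
    congr 1
    field_simp
    ring

theorem coeff_one_nodal {ι K : Type*} [Field K] {s : Finset ι} {a : ι → K}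
    (ha : ∀ i ∈ s, a i ≠ 0) :
    (nodal s a).coeff 1 = -((nodal s a).coeff 0 * ∑ i ∈ s, 1 / a i) := by
  classical
  induction s using Finset.induction_on with
  | empty => simp [coeff_one]
  | insert i s hi ih =>
    have hai : a i ≠ 0 := ha i (mem_insert_self i s)
    rw [nodal_insert_eq_nodal hi, sum_insert hi, mul_coeff_one, mul_coeff_zero,
      ih fun j hj => ha j (mem_insert_of_mem hj)]
    simp only [coeff_sub, coeff_X_zero, coeff_X_one, coeff_C_zero, coeff_C_succ]
    field_simp
    ring

theorem norm_coeff_nodal_le {ι R : Type*} [NormedCommRing R] [NormOneClass R] (s : Finset ι)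
    (a : ι → R) (i : ℕ) : ‖(nodal s a).coeff i‖ ≤ ∏ m ∈ s, (1 + ‖a m‖) := by
  classical
  induction s using Finset.induction_on generalizing i with
  | empty => by_cases hi : i = 0 <;> simp [coeff_one, hi]
  | insert m s hm ih =>
    rw [nodal_insert_eq_nodal hm, prod_insert hm, mul_comm (X - C (a m))]
    cases i with
    | zero =>
      have hle := mul_le_mul_of_nonneg_left (ih 0) (norm_nonneg (a m))
      simp only [mul_coeff_zero, coeff_sub, coeff_X_zero, coeff_C_zero, zero_sub, mul_neg, norm_neg]
      linarith [norm_mul_le ((nodal s a).coeff 0) (a m), norm_nonneg ((nodal s a).coeff 0), ih 0]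
    | succ i =>
      rw [coeff_mul_X_sub_C]
      have hle := mul_le_mul_of_nonneg_left (ih (i + 1)) (norm_nonneg (a m))
      linarith [norm_sub_le ((nodal s a).coeff i) ((nodal s a).coeff (i + 1) * a m),
        norm_mul_le ((nodal s a).coeff (i + 1)) (a m), ih i]

end Newton

section DescFactorial

theorem one_div_descFactorial_sub {K : Type*} [Field K] [CharZero K] {n d : ℕ} (h : d ≤ n) :
    1 / (n.descFactorial d : K) - 1 / ((n + 1).descFactorial d : K) =
      d / ((n + 1).descFactorial (d + 1) : K) := by
  have hn : (n.descFactorial d : K) ≠ 0 := Nat.cast_ne_zero.2 (Nat.descFactorial_pos.2 h).ne'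
  have hn' : ((n + 1).descFactorial d : K) ≠ 0 :=
    Nat.cast_ne_zero.2 (Nat.descFactorial_pos.2 (h.trans n.le_succ)).ne'
  have hn1 : (n : K) + 1 ≠ 0 := n.cast_add_one_ne_zero
  have hrec : ((n : K) + 1 - d) * ((n + 1).descFactorial d : K) =
      (n + 1) * (n.descFactorial d : K) := by
    have := congrArg (Nat.cast (R := K)) (Nat.succ_descFactorial n d)
    push_cast [Nat.cast_sub (h.trans n.le_succ)] at this
    exact this
  rw [Nat.succ_descFactorial_succ, Nat.cast_mul, Nat.cast_succ]
  field_simp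
  linear_combination hrec

theorem cast_descFactorial_succ {R : Type*} [CommRing R] (n d : ℕ) :
    (n.descFactorial (d + 1) : R) = n.descFactorial d * (n - d) := by
  simp only [← descPochhammer_eval_eq_descFactorial, descPochhammer_succ_eval]

theorem mul_factorial_sq_le_descFactorial {j N : ℕ} (h : j + 1 ≤ N) :
    (N + 1) * ((j + 1) * j ! ^ 2) ≤ (N + j + 1).descFactorial (2 * j + 2) := by
  have hfac : (j + 1) * j ! ^ 2 ≤ (2 * j + 1)! := calc
    (j + 1) * j ! ^ 2 = j ! * (j + 1)! := by rw [Nat.factorial_succ]; ring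
    _ ≤ (j + (j + 1))! :=
      Nat.le_of_dvd (Nat.factorial_pos _) (Nat.factorial_mul_factorial_dvd_factorial_add _ _)
    _ = (2 * j + 1)! := by rw [← add_assoc, two_mul]
  have hchoose : 0 < (N + j).choose (2 * j + 1) := Nat.choose_pos (by lia)
  rw [Nat.succ_descFactorial_succ, Nat.descFactorial_eq_factorial_mul_choose]
  exact Nat.mul_le_mul (by lia) (hfac.trans (Nat.le_mul_of_pos_right _ hchoose))

end DescFactorial

theorem summable_one_div_add_one_pow {m : ℕ} (hm : 1 < m) :
    Summable fun i : ℕ => 1 / ((i : ℝ) + 1) ^ m := by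
  have := (summable_nat_add_iff 1).2 (Real.summable_one_div_nat_pow.2 hm)
  simpa only [Nat.cast_add_one] using this

section SquareNodal

/-- `∏_{m=1}^k (X - m²)`, the Newton basis polynomial for interpolation at the squares. -/
noncomputable def squareNodal (k : ℕ) : ℝ[X] :=
  nodal (range k) fun m => ((m : ℝ) + 1) ^ 2

theorem mul_eval_squareNodal (n k : ℕ) :
    n * (squareNodal k).eval ((n : ℝ) ^ 2) = ((n + k).descFactorial (2 * k + 1) : ℝ) := by
  induction k with
  | zero => simp [squareNodal]
  | succ k ih =>
    have hrec : ((n + (k + 1)).descFactorial (2 * (k + 1) + 1) : ℝ) =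
        (n + k + 1) * ((n + k).descFactorial (2 * k + 1) * (n - (k + 1))) := by
      rw [← add_assoc, mul_add_one, Nat.succ_descFactorial_succ, Nat.cast_mul,
        cast_descFactorial_succ]
      push_cast
      ring
    rw [hrec, ← ih, squareNodal, nodal_range_succ, ← squareNodal, eval_mul, eval_sub, eval_X,
      eval_C]
    ring

theorem one_div_sq_pow_succ_eq_sum_squareNodal (r n : ℕ) :
    1 / (((n : ℝ) + 1) ^ 2) ^ (r + 1) =
      ∑ j ∈ range n, (squareNodal j).coeff r / (squareNodal (j + 1)).eval (((n : ℝ) + 1) ^ 2) +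
        truncEval (squareNodal n) (r + 1) (((n : ℝ) + 1) ^ 2) /
          ((((n : ℝ) + 1) ^ 2) ^ (r + 1) * (squareNodal n).eval (((n : ℝ) + 1) ^ 2)) :=
  one_div_pow_succ_eq_sum_nodal (by positivity) (fun j hj => by
    have hlt : (j : ℝ) < n := Nat.cast_lt.2 hj
    exact (pow_lt_pow_left₀ (by linarith) (by positivity) two_ne_zero).ne') r

theorem coeff_zero_squareNodal (k : ℕ) : (squareNodal k).coeff 0 = (-1) ^ k * (k ! : ℝ) ^ 2 := by
  rw [coeff_zero_eq_eval_zero, squareNodal, eval_nodal, ← prod_range_add_one_eq_factorial]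
  push_cast
  simp_rw [zero_sub, prod_neg, card_range, prod_pow]

theorem coeff_one_squareNodal (k : ℕ) :
    (squareNodal k).coeff 1 = -((squareNodal k).coeff 0 * genHarmonic 2 k) :=
  coeff_one_nodal fun m _ => by positivity

theorem exists_abs_coeff_squareNodal_le :
    ∃ C : ℝ, ∀ k i : ℕ, |(squareNodal k).coeff i| ≤ C * (k ! : ℝ) ^ 2 := by
  refine ⟨Real.exp (∑' m : ℕ, 1 / ((m : ℝ) + 1) ^ 2), fun k i => ?_⟩
  calc |(squareNodal k).coeff i|
      ≤ ∏ m ∈ range k, (1 + ‖((m : ℝ) + 1) ^ 2‖) :=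
        norm_coeff_nodal_le (range k) (fun m => ((m : ℝ) + 1) ^ 2) i
    _ = (∏ m ∈ range k, (1 + 1 / ((m : ℝ) + 1) ^ 2)) * (k ! : ℝ) ^ 2 := by
        rw [← prod_range_add_one_eq_factorial, Nat.cast_prod, ← prod_pow, ← prod_mul_distrib]
        refine prod_congr rfl fun m _ => ?_
        rw [Real.norm_of_nonneg (by positivity)]
        push_cast
        field_simp
        ring
    _ ≤ Real.exp (∑' m : ℕ, 1 / ((m : ℝ) + 1) ^ 2) * (k ! : ℝ) ^ 2 := by
        gcongr
        refine (Real.prod_one_add_le_exp_sum _ fun m => by positivity).trans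
          (Real.exp_le_exp.2 ?_)
        exact (summable_one_div_add_one_pow one_lt_two).sum_le_tsum _ fun _ _ => by positivity

end SquareNodal

section Koecher

/-- The term of index `n + 1` in Koecher's accelerated series for `ζ(2r + 3)`. -/
noncomputable def koecherTerm (r n : ℕ) : ℝ :=
  ((squareNodal n).coeff r / (2 * ((n : ℝ) + 1)) +
    2 * truncEval (squareNodal n) (r + 1) (((n : ℝ) + 1) ^ 2) / ((n : ℝ) + 1) ^ (2 * r + 1)) /
      (2 * n + 2)!

/-- The terms left over when the first `N` Newton expansions are telescoped; by
`sum_one_div_pow_eq_sum_koecherTerm_sub` this is how far the `N`-th partial sum of Koecher's series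
for `ζ(2r + 3)` exceeds that of `∑ 1 / n ^ (2r + 3)`. -/
noncomputable def koecherTail (r N : ℕ) : ℝ :=
  ∑ j ∈ range N,
    (squareNodal j).coeff r / (2 * ((j : ℝ) + 1) * (N + j + 1).descFactorial (2 * j + 2))

theorem one_div_mul_eval_squareNodal {j n : ℕ} (h : j < n) :
    1 / (((n : ℝ) + 1) * (squareNodal (j + 1)).eval (((n : ℝ) + 1) ^ 2)) =
      1 / (2 * ((j : ℝ) + 1) * (n + j + 1).descFactorial (2 * j + 2)) -
        1 / (2 * ((j : ℝ) + 1) * (n + 1 + j + 1).descFactorial (2 * j + 2)) := by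
  have hnodal := mul_eval_squareNodal (n + 1) (j + 1)
  have htel := one_div_descFactorial_sub (K := ℝ) (n := n + j + 1) (d := 2 * j + 2) (by lia)
  rw [show n + 1 + (j + 1) = n + j + 1 + 1 by lia, Nat.cast_add_one] at hnodal
  rw [hnodal, show n + 1 + j + 1 = n + j + 1 + 1 by lia, ← one_div_mul_one_div,
    ← one_div_mul_one_div _ ((n + j + 1 + 1).descFactorial _ : ℝ), ← mul_sub, htel,
    show 2 * (j + 1) + 1 = 2 * j + 2 + 1 by lia]
  push_cast
  field_simp

theorem koecherTerm_eq_add_truncEval_div (r n : ℕ) :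
    koecherTerm r n =
      (squareNodal n).coeff r / (2 * ((n : ℝ) + 1) * (n + 1 + n + 1).descFactorial (2 * n + 2)) +
        truncEval (squareNodal n) (r + 1) (((n : ℝ) + 1) ^ 2) /
          ((((n : ℝ) + 1) ^ 2) ^ (r + 1) *
            (((n : ℝ) + 1) * (squareNodal n).eval (((n : ℝ) + 1) ^ 2))) := by
  have hnodal := mul_eval_squareNodal (n + 1) n
  rw [show n + 1 + n = 2 * n + 1 by lia, Nat.descFactorial_self, Nat.cast_add_one] at hnodal
  rw [hnodal, show n + 1 + n + 1 = 2 * n + 2 by lia, Nat.descFactorial_self, koecherTerm,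
    Nat.factorial_succ (2 * n + 1), ← pow_mul, show 2 * (r + 1) = 2 * r + 1 + 1 by lia]
  push_cast
  field_simp
  ring

theorem one_div_pow_eq_koecherTerm_sub (r n : ℕ) :
    1 / ((n : ℝ) + 1) ^ (2 * r + 3) =
      koecherTerm r n - (koecherTail r (n + 1) - koecherTail r n) := by
  have htail : ∑ j ∈ range n, (squareNodal j).coeff r /
        (((n : ℝ) + 1) * (squareNodal (j + 1)).eval (((n : ℝ) + 1) ^ 2)) =
      koecherTail r n - ∑ j ∈ range n, (squareNodal j).coeff r /
        (2 * ((j : ℝ) + 1) * (n + 1 + j + 1).descFactorial (2 * j + 2)) := by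
    rw [koecherTail, ← sum_sub_distrib]
    refine sum_congr rfl fun j hj => ?_
    rw [div_eq_mul_one_div, one_div_mul_eval_squareNodal (mem_range.1 hj), mul_sub,
      mul_one_div, mul_one_div]
  calc 1 / ((n : ℝ) + 1) ^ (2 * r + 3)
      = 1 / (((n : ℝ) + 1) ^ 2) ^ (r + 1) / ((n : ℝ) + 1) := by
        rw [div_div, ← pow_mul, ← pow_succ]
        ring_nf
    _ = (koecherTail r n - ∑ j ∈ range n, (squareNodal j).coeff r /
          (2 * ((j : ℝ) + 1) * (n + 1 + j + 1).descFactorial (2 * j + 2))) +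
        truncEval (squareNodal n) (r + 1) (((n : ℝ) + 1) ^ 2) /
          ((((n : ℝ) + 1) ^ 2) ^ (r + 1) *
            (((n : ℝ) + 1) * (squareNodal n).eval (((n : ℝ) + 1) ^ 2))) := by
        rw [one_div_sq_pow_succ_eq_sum_squareNodal, add_div, sum_div, ← htail]
        simp only [div_div, mul_assoc, mul_comm ((n : ℝ) + 1)]
    _ = koecherTerm r n - (koecherTail r (n + 1) - koecherTail r n) := by
        rw [koecherTerm_eq_add_truncEval_div, koecherTail, koecherTail, sum_range_succ]
        ring

theorem sum_one_div_pow_eq_sum_koecherTerm_sub (r N : ℕ) :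
    ∑ n ∈ range N, 1 / ((n : ℝ) + 1) ^ (2 * r + 3) =
      ∑ n ∈ range N, koecherTerm r n - koecherTail r N := by
  simp_rw [one_div_pow_eq_koecherTerm_sub, sum_sub_distrib (f := koecherTerm r), sum_range_sub]
  simp [koecherTail]

theorem exists_abs_koecherTail_le (r : ℕ) :
    ∃ B : ℝ, ∀ N : ℕ, |koecherTail r N| ≤ B * (1 / ((N : ℝ) + 1)) := by
  obtain ⟨C, hC⟩ := exists_abs_coeff_squareNodal_le
  have hC0 : 0 ≤ C := by simpa using (abs_nonneg _).trans (hC 0 0)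
  refine ⟨C * ∑' j : ℕ, 1 / ((j : ℝ) + 1) ^ 2, fun N => ?_⟩
  have hterm : ∀ j ∈ range N,
      |(squareNodal j).coeff r / (2 * ((j : ℝ) + 1) * (N + j + 1).descFactorial (2 * j + 2))| ≤
        C * (1 / ((j : ℝ) + 1) ^ 2) * (1 / ((N : ℝ) + 1)) := by
    intro j hj
    have hdesc : ((N : ℝ) + 1) * ((j + 1) * j ! ^ 2) ≤
        ((N + j + 1).descFactorial (2 * j + 2) : ℝ) := by
      exact_mod_cast mul_factorial_sq_le_descFactorial (mem_range.1 hj)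
    rw [abs_div, abs_of_nonneg (by positivity : (0 : ℝ) ≤ 2 * ((j : ℝ) + 1) * _)]
    calc |(squareNodal j).coeff r| / (2 * ((j : ℝ) + 1) * (N + j + 1).descFactorial (2 * j + 2))
        ≤ C * (j ! : ℝ) ^ 2 / (1 * ((j : ℝ) + 1) * (((N : ℝ) + 1) * ((j + 1) * j ! ^ 2))) := by
          gcongr
          exacts [hC j r, one_le_two]
      _ = C * (1 / ((j : ℝ) + 1) ^ 2) * (1 / ((N : ℝ) + 1)) := by field_simp
  calc |koecherTail r N|
      ≤ ∑ j ∈ range N, C * (1 / ((j : ℝ) + 1) ^ 2) * (1 / ((N : ℝ) + 1)) :=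
        (abs_sum_le_sum_abs _ _).trans (sum_le_sum hterm)
    _ = C * (∑ j ∈ range N, 1 / ((j : ℝ) + 1) ^ 2) * (1 / ((N : ℝ) + 1)) := by
        rw [← sum_mul, ← mul_sum]
    _ ≤ C * (∑' j : ℕ, 1 / ((j : ℝ) + 1) ^ 2) * (1 / ((N : ℝ) + 1)) := by
        gcongr
        exact (summable_one_div_add_one_pow one_lt_two).sum_le_tsum _ fun _ _ => by positivity

theorem tendsto_koecherTail (r : ℕ) : Tendsto (koecherTail r) atTop (𝓝 0) := by
  obtain ⟨B, hB⟩ := exists_abs_koecherTail_le r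
  refine squeeze_zero_norm hB ?_
  simpa only [mul_zero] using
    (tendsto_one_div_add_atTop_nhds_zero_nat (𝕜 := ℝ)).const_mul B

theorem exists_abs_koecherTerm_le (r : ℕ) :
    ∃ B : ℝ, ∀ n : ℕ, |koecherTerm r n| ≤ B * (1 / ((n : ℝ) + 1) ^ 3) := by
  obtain ⟨C, hC⟩ := exists_abs_coeff_squareNodal_le
  refine ⟨C * (1 / 2 + 2 * (r + 1)), fun n => ?_⟩
  have hx : (1 : ℝ) ≤ ((n : ℝ) + 1) ^ 2 := one_le_pow₀ (by linarith [n.cast_nonneg (α := ℝ)])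
  have hfac : ((n : ℝ) + 1) * (((n : ℝ) + 1) * (n ! : ℝ) ^ 2) ≤ ((2 * n + 2)! : ℝ) := by
    have h := mul_factorial_sq_le_descFactorial (le_refl (n + 1))
    rw [show n + 1 + n + 1 = 2 * n + 2 by lia, Nat.descFactorial_self] at h
    exact_mod_cast (Nat.mul_le_mul_right _ (n + 1).le_succ).trans h
  have hcoeff : |(squareNodal n).coeff r / (2 * ((n : ℝ) + 1))| ≤
      C * (n ! : ℝ) ^ 2 / (2 * ((n : ℝ) + 1)) := by
    rw [abs_div, abs_of_pos (by positivity : (0 : ℝ) < 2 * ((n : ℝ) + 1))]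
    gcongr
    exact hC n r
  have htrunc : |2 * truncEval (squareNodal n) (r + 1) (((n : ℝ) + 1) ^ 2) /
      ((n : ℝ) + 1) ^ (2 * r + 1)| ≤
        2 * ((r + 1) * (C * (n ! : ℝ) ^ 2 * (((n : ℝ) + 1) ^ 2) ^ r)) /
          ((n : ℝ) + 1) ^ (2 * r + 1) := by
    rw [abs_div, abs_mul, abs_two, abs_of_pos (by positivity : 0 < ((n : ℝ) + 1) ^ (2 * r + 1))]
    gcongr
    exact abs_truncEval_succ_le (hC n) hx r
  have hnum := (abs_add_le _ _).trans (add_le_add hcoeff htrunc)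
  rw [koecherTerm, abs_div, Nat.abs_cast]
  calc _ ≤ (C * (n ! : ℝ) ^ 2 / (2 * ((n : ℝ) + 1)) +
        2 * ((r + 1) * (C * (n ! : ℝ) ^ 2 * (((n : ℝ) + 1) ^ 2) ^ r)) /
          ((n : ℝ) + 1) ^ (2 * r + 1)) / (((n : ℝ) + 1) * (((n : ℝ) + 1) * (n ! : ℝ) ^ 2)) :=
        div_le_div₀ ((abs_nonneg _).trans hnum) hnum (by positivity) hfac
    _ = C * (1 / 2 + 2 * (r + 1)) * (1 / ((n : ℝ) + 1) ^ 3) := by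
        rw [← pow_mul]
        field_simp
        ring

theorem summable_koecherTerm (r : ℕ) : Summable (koecherTerm r) := by
  obtain ⟨B, hB⟩ := exists_abs_koecherTerm_le r
  exact .of_norm_bounded ((summable_one_div_add_one_pow (by norm_num : 1 < 3)).mul_left B) hB

theorem hasSum_koecherTerm (r : ℕ) :
    HasSum (koecherTerm r) (∑' n : ℕ, 1 / ((n : ℝ) + 1) ^ (2 * r + 3)) := by
  rw [(summable_koecherTerm r).hasSum_iff_tendsto_nat]
  have hzeta := (summable_one_div_add_one_pow
    (by lia : 1 < 2 * r + 3)).hasSum.tendsto_sum_nat.add (tendsto_koecherTail r)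
  simpa only [sum_one_div_pow_eq_sum_koecherTerm_sub, sub_add_cancel, add_zero] using hzeta

theorem riemannZeta_natCast_eq_ofReal_tsum {k : ℕ} (hk : 1 < k) :
    riemannZeta k = ((∑' n : ℕ, 1 / ((n : ℝ) + 1) ^ k : ℝ) : ℂ) := by
  rw [zeta_eq_tsum_one_div_nat_add_one_cpow (by simpa using hk), Complex.ofReal_tsum]
  push_cast
  simp only [Complex.cpow_natCast]

theorem tsum_koecherTerm (r : ℕ) :
    ∑' n : ℕ, (koecherTerm r n : ℂ) = riemannZeta (2 * r + 3) := by
  rw [← Complex.ofReal_tsum, (hasSum_koecherTerm r).tsum_eq,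
    ← riemannZeta_natCast_eq_ofReal_tsum (by lia)]
  push_cast
  rfl

end Koecher

theorem risingFactorial_one (n : ℕ) : risingFactorial 1 n = n ! := by
  rw [risingFactorial, ← prod_range_add_one_eq_factorial]
  push_cast
  simp only [add_comm]

theorem four_pow_mul_factorial_mul_risingFactorial_half (n : ℕ) :
    4 ^ n * n ! * risingFactorial (1 / 2) n = (2 * n)! := by
  induction n with
  | zero => simp [risingFactorial]
  | succ n ih =>
    have hrec : risingFactorial (1 / 2) (n + 1) = risingFactorial (1 / 2) n * (1 / 2 + n) :=
      prod_range_succ _ _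
    rw [hrec, mul_add_one, Nat.factorial_succ (2 * n + 1), Nat.factorial_succ (2 * n),
      Nat.factorial_succ n]
    push_cast
    rw [← ih]
    ring

theorem neg_quarter_pow_mul_risingFactorial_div (n : ℕ) :
    (-1 / 4 : ℝ) ^ n * risingFactorial 1 n / risingFactorial (1 / 2) n =
      (-1) ^ n * (n ! : ℝ) ^ 2 / (2 * n)! := by
  have hpos : 0 < risingFactorial (1 / 2) n := prod_pos fun i _ => by positivity
  rw [risingFactorial_one, ← four_pow_mul_factorial_mul_risingFactorial_half, div_pow]
  field_simp

theorem summand_eq_koecherTerm_one (n : ℕ) :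
    (-1 / 4 : ℝ) ^ (n + 1) * risingFactorial 1 (n + 1) / risingFactorial (1 / 2) (n + 1) *
      (genHarmonic 2 (n + 1) / ((n : ℝ) + 1) ^ 3 - 9 / (5 * ((n : ℝ) + 1) ^ 5)) =
      2 / 5 * koecherTerm 1 n := by
  have hH : genHarmonic 2 (n + 1) = genHarmonic 2 n + 1 / ((n : ℝ) + 1) ^ 2 :=
    sum_range_succ _ _
  rw [neg_quarter_pow_mul_risingFactorial_div, hH, koecherTerm, truncEval, sum_range_succ,
    sum_range_one, coeff_one_squareNodal, coeff_zero_squareNodal, mul_add_one 2 n,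
    Nat.factorial_succ n]
  push_cast
  field_simp
  ring

/-- `∑_{n≥1} (−1/4)^n (1)ₙ/(1/2)ₙ (H_n^{(2)}/n³ − 9/(5n^5)) = (2/5)ζ(5)`. -/
theorem harmonic2_zeta5_series :
    ∑' n : ℕ, ((((-1 / 4 : ℝ) ^ (n + 1) * risingFactorial 1 (n + 1) /
        risingFactorial (1 / 2) (n + 1) *
        (genHarmonic 2 (n + 1) / ((n : ℝ) + 1) ^ 3 - 9 / (5 * ((n : ℝ) + 1) ^ 5)) : ℝ)) : ℂ)
      = 2 / 5 * riemannZeta 5 := by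
  have hzeta : ∑' n : ℕ, (koecherTerm 1 n : ℂ) = riemannZeta 5 := by
    rw [tsum_koecherTerm]
    norm_num
  simp_rw [summand_eq_koecherTerm_one, Complex.ofReal_mul, tsum_mul_left, hzeta]
  norm_num
end
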